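/- arXiv:1201.3315 — 5 statements merged into one kernel-verified Lean document; each statement's English description precedes it below -/
import Mathlib

section
/- Let π be a Lipschitz integer with N(π) = p an odd rational prime, and let n ≥ 1 and 1 ≤ k ≤ n. If C is an additive subgroup of H(ℤ)_π^n of cardinality (p²)^k (an (n,k) linear code) that corrects all errors of Lipschitz weight 1 or less, then (p²)^{n−k} ≥ 8n + 1. -/
open Quaternion

/-- The set `{δ * π : δ ∈ H(ℤ)}`, as an additive subgroup of the Lipschitz
integers `ℍ[ℤ]`.  Two Lipschitz integers are right congruent modulo `π` iff
their difference lies in this subgroup. -/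
def lipMultiples (π : ℍ[ℤ]) : AddSubgroup ℍ[ℤ] where
  carrier := Set.range (fun δ => δ * π)
  zero_mem' := ⟨0, zero_mul π⟩
  add_mem' := by rintro _ _ ⟨a, rfl⟩ ⟨b, rfl⟩; exact ⟨a + b, add_mul a b π⟩
  neg_mem' := by rintro _ ⟨a, rfl⟩; exact ⟨-a, neg_mul a π⟩

/-- `H(ℤ)_π`: the Lipschitz integers modulo right congruence modulo `π`. -/
abbrev LipMod (π : ℍ[ℤ]) := ℍ[ℤ] ⧸ lipMultiples π

/-- The Lipschitz weight of a class `x ∈ H(ℤ)_π`: the least value of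
`|a₀| + |a₁| + |a₂| + |a₃|` over all representatives `a₀ + a₁e₁ + a₂e₂ + a₃e₃` of `x`. -/
noncomputable def lipWt (π : ℍ[ℤ]) (x : LipMod π) : ℕ :=
  sInf {m | ∃ q : ℍ[ℤ], (QuotientAddGroup.mk q : LipMod π) = x ∧
    m = q.re.natAbs + q.imI.natAbs + q.imJ.natAbs + q.imK.natAbs}

/-- The Lipschitz weight of a vector over `H(ℤ)_π` is the sum of the Lipschitz
weights of its components. -/
noncomputable def lipWtVec (π : ℍ[ℤ]) {n : ℕ} (v : Fin n → LipMod π) : ℕ :=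
  ∑ i, lipWt π (v i)

/-- A code `C ⊆ H(ℤ)_π^n` corrects all errors of Lipschitz weight `t` or less:
any two distinct vectors of Lipschitz weight at most `t` lie in distinct cosets of `C`. -/
def CorrectsLip (π : ℍ[ℤ]) {n : ℕ} (C : AddSubgroup (Fin n → LipMod π)) (t : ℕ) : Prop :=
  ∀ u v : Fin n → LipMod π, lipWtVec π u ≤ t → lipWtVec π v ≤ t → u - v ∈ C → u = v

lemma lip_index (π : ℍ[ℤ]) (p : ℕ) (hp : p.Prime)
    (hN : Quaternion.normSq π = (p : ℤ)) : Nat.card (LipMod π) = p ^ 2 := by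
  have hπ : π ≠ 0 := by
    rintro rfl
    simp at hN
    exact hp.ne_zero (by exact_mod_cast hN.symm)
  let f : ℍ[ℤ] →+ lipMultiples π :=
    { toFun := fun δ => ⟨δ * π, δ, rfl⟩
      map_zero' := by ext1; simp
      map_add' := fun a b => by ext1; simp [add_mul] }
  have hf : Function.Bijective f := by
    constructor
    · intro a b h
      have h1 : a * π = b * π := congrArg Subtype.val h
      exact mul_right_cancel₀ hπ h1
    · rintro ⟨_, δ, rfl⟩
      exact ⟨δ, rfl⟩
  let e : ℍ[ℤ] ≃ₗ[ℤ] lipMultiples π := (AddEquiv.ofBijective f hf).toIntLinearEquiv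
  let g : ℍ[ℤ] ≃+ (Fin 4 → ℤ) :=
    { toFun := fun q => ![q.re, q.imI, q.imJ, q.imK]
      invFun := fun v => ⟨v 0, v 1, v 2, v 3⟩
      left_inv := fun q => rfl
      right_inv := fun v => by ext i; fin_cases i <;> rfl
      map_add' := fun x y => by ext i; fin_cases i <;> rfl }
  let b : Module.Basis (Fin 4) ℤ ℍ[ℤ] := Module.Basis.ofEquivFun g.toIntLinearEquiv
  have hrepr : ∀ q i, b.repr q i = ![q.re, q.imI, q.imJ, q.imK] i := fun q i => rfl
  have key := AddSubgroup.index_eq_natAbs_det b (lipMultiples π) (b.map e)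
  have hv : ∀ i, (((b.map e) i : lipMultiples π) : ℍ[ℤ]) = b i * π := fun i => rfl
  have hb : ∀ i, b i = ![⟨1,0,0,0⟩, ⟨0,1,0,0⟩, ⟨0,0,1,0⟩, ⟨0,0,0,1⟩] i := by
    intro i
    apply b.repr.injective
    rw [Module.Basis.repr_self]
    ext j
    rw [hrepr]
    fin_cases i <;> fin_cases j <;> simp [Finsupp.single_apply]
  have hdet : b.det (fun i => (((b.map e) i : lipMultiples π) : ℍ[ℤ])) = (p : ℤ) ^ 2 := by
    rw [← hN, Quaternion.normSq_def']
    simp only [hv]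
    rw [Module.Basis.det_apply]
    have : b.toMatrix (fun i => b i * π) =
      !![π.re, -π.imI, -π.imJ, -π.imK; π.imI, π.re, π.imK, -π.imJ;
         π.imJ, -π.imK, π.re, π.imI; π.imK, π.imJ, -π.imI, π.re] := by
      ext i j
      rw [Module.Basis.toMatrix_apply, hrepr, Quaternion.re_mul, Quaternion.imI_mul,
        Quaternion.imJ_mul, Quaternion.imK_mul, hb]
      fin_cases i <;> fin_cases j <;> simp
    rw [this]
    simp [Matrix.det_succ_row_zero, Fin.sum_univ_succ, Fin.succAbove]
    ring
  rw [hdet] at key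
  rw [← AddSubgroup.index_eq_card, key]
  simp [Int.natAbs_pow]

/-- The eight units. -/
def lipU : Fin 8 → ℍ[ℤ] :=
  ![⟨1,0,0,0⟩, ⟨0,1,0,0⟩, ⟨0,0,1,0⟩, ⟨0,0,0,1⟩,
    ⟨-1,0,0,0⟩, ⟨0,-1,0,0⟩, ⟨0,0,-1,0⟩, ⟨0,0,0,-1⟩]

lemma lipU_wt (a : Fin 8) : (lipU a).re.natAbs + (lipU a).imI.natAbs + (lipU a).imJ.natAbs
    + (lipU a).imK.natAbs = 1 := by
  fin_cases a <;> rfl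

lemma lip_not_mem (π : ℍ[ℤ]) (p : ℕ) (hp : p.Prime) (hodd : Odd p)
    (hN : Quaternion.normSq π = (p : ℤ)) (q : ℍ[ℤ])
    (hq : Quaternion.normSq q ∣ 4) : q ∉ lipMultiples π := by
  rintro ⟨δ, rfl⟩
  have h : (p : ℤ) ∣ 4 := by
    refine dvd_trans ?_ hq
    rw [map_mul, hN]
    exact dvd_mul_left _ _
  have h2 : p ∣ 2 ^ 2 := by exact_mod_cast h
  have h3 := (Nat.prime_dvd_prime_iff_eq hp Nat.prime_two).1 (hp.dvd_of_dvd_pow h2)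
  subst h3
  exact absurd hodd (by decide)

lemma lipU_norm (a : Fin 8) : Quaternion.normSq (lipU a) ∣ 4 := by
  rw [Quaternion.normSq_def']
  fin_cases a <;> simp [lipU]

lemma lipU_norm_sub (a b : Fin 8) (h : a ≠ b) : Quaternion.normSq (lipU a - lipU b) ∣ 4 := by
  rw [Quaternion.normSq_def', Quaternion.re_sub, Quaternion.imI_sub, Quaternion.imJ_sub,
    Quaternion.imK_sub]
  revert a b
  simp only [lipU]
  decide

lemma lipWt_mk_le (π q : ℍ[ℤ]) : lipWt π (QuotientAddGroup.mk q) ≤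
    q.re.natAbs + q.imI.natAbs + q.imJ.natAbs + q.imK.natAbs :=
  Nat.sInf_le ⟨q, rfl, rfl⟩

lemma lipWt_zero (π : ℍ[ℤ]) : lipWt π 0 = 0 := by
  have := lipWt_mk_le π 0
  simpa using this

/-- The error vectors of weight at most one. -/
noncomputable def lipErr (π : ℍ[ℤ]) (n : ℕ) : Option (Fin n × Fin 8) → (Fin n → LipMod π)
  | none => 0
  | some (i, a) => Pi.single i (QuotientAddGroup.mk (lipU a))

lemma lipErr_wt (π : ℍ[ℤ]) (n : ℕ) (x) : lipWtVec π (lipErr π n x) ≤ 1 := by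
  rcases x with _ | ⟨i, a⟩
  · simp [lipWtVec, lipErr, lipWt_zero]
  · change ∑ j, lipWt π ((Pi.single i (QuotientAddGroup.mk (lipU a)) : Fin n → LipMod π) j) ≤ 1
    rw [Finset.sum_eq_single i]
    · rw [Pi.single_eq_same]
      exact (lipWt_mk_le _ _).trans (lipU_wt a).le
    · intro j _ hj
      rw [Pi.single_eq_of_ne hj, lipWt_zero]
    · simp

lemma lipErr_inj (π : ℍ[ℤ]) (p : ℕ) (hp : p.Prime) (hodd : Odd p)
    (hN : Quaternion.normSq π = (p : ℤ)) (n : ℕ) : Function.Injective (lipErr π n) := by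
  have h0 : ∀ a, (QuotientAddGroup.mk (lipU a) : LipMod π) ≠ 0 := fun a h =>
    lip_not_mem π p hp hodd hN _ (lipU_norm a) ((QuotientAddGroup.eq_zero_iff _).1 h)
  rintro (_ | ⟨i, a⟩) (_ | ⟨j, b⟩) h
  · rfl
  · exact absurd (Pi.single_eq_zero_iff.1 h.symm) (h0 b)
  · exact absurd (Pi.single_eq_zero_iff.1 h) (h0 a)
  · have hij : i = j := by
      by_contra hne
      have := congrFun h i
      simp only [lipErr, Pi.single_eq_same, Pi.single_eq_of_ne hne] at this
      exact h0 a this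
    subst hij
    have hab := Pi.single_injective i h
    by_contra hne
    have hne' : a ≠ b := fun h => hne (by rw [h])
    refine lip_not_mem π p hp hodd hN _ (lipU_norm_sub a b hne') ?_
    rw [← QuotientAddGroup.eq_zero_iff, QuotientAddGroup.mk_sub, sub_eq_zero]
    exact hab

/-- An `(n, k)` linear code over `H(ℤ)_π` (`N(π) = p` an odd prime) correcting all
errors of Lipschitz weight 1 satisfies `(p²)^(n-k) ≥ 8n + 1`. -/
theorem sphere_packing_lipschitz_wt_one (π : ℍ[ℤ]) (p : ℕ) (hp : p.Prime) (hodd : Odd p)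
    (hN : Quaternion.normSq π = (p : ℤ))
    (n k : ℕ) (hn : 1 ≤ n) (hk : 1 ≤ k) (hkn : k ≤ n)
    (C : AddSubgroup (Fin n → LipMod π))
    (hcard : Nat.card C = (p ^ 2) ^ k)
    (hcorr : CorrectsLip π C 1) :
    8 * n + 1 ≤ (p ^ 2) ^ (n - k) := by
  have hL := lip_index π p hp hN
  have hG : Nat.card (Fin n → LipMod π) = (p ^ 2) ^ n := by
    rw [Nat.card_fun, hL, Nat.card_eq_fintype_card, Fintype.card_fin]
  have hpos : 0 < p ^ 2 := pow_pos hp.pos 2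
  have : Finite (Fin n → LipMod π) :=
    Nat.finite_of_card_ne_zero (by rw [hG]; exact (pow_pos hpos n).ne')
  have hQ : Nat.card ((Fin n → LipMod π) ⧸ C) = (p ^ 2) ^ (n - k) := by
    have h1 := AddSubgroup.card_eq_card_quotient_mul_card_addSubgroup C
    have h2 : (p ^ 2) ^ n = (p ^ 2) ^ (n - k) * (p ^ 2) ^ k := by
      rw [← pow_add, Nat.sub_add_cancel hkn]
    rw [hG, hcard, h2] at h1
    exact (Nat.eq_of_mul_eq_mul_right (pow_pos hpos k) h1).symm
  have hinj : Function.Injective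
      (fun x => (QuotientAddGroup.mk (lipErr π n x) : (Fin n → LipMod π) ⧸ C)) := by
    intro x y h
    apply lipErr_inj π p hp hodd hN n
    apply hcorr _ _ (lipErr_wt π n x) (lipErr_wt π n y)
    rw [← QuotientAddGroup.eq_zero_iff, QuotientAddGroup.mk_sub, sub_eq_zero]
    exact h
  have hle := Nat.card_le_card_of_injective _ hinj
  rw [hQ] at hle
  refine le_trans (le_of_eq ?_) hle
  rw [Nat.card_eq_fintype_card]
  simp [mul_comm]
end

section
/- Let π = 1 + e₁ + e₂, so that N(π) = 3, and let n ≥ 1 and 1 ≤ k ≤ n. If C is an additive subgroup of H(ℤ)_{1+e₁+e₂}^n of cardinality 9^k (an (n,k) linear code) that corrects all errors of Lipschitz weight 2 or less, then 9^{n−k} ≥ 32n² − 24n + 1. -/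
open Quaternion

/-- The additive map whose kernel is the set of left multiples of `1+e₁+e₂`. -/
def lipPhi : ℍ[ℤ] →+ ZMod 3 × ZMod 3 where
  toFun q := (((q.re + q.imI + q.imJ : ℤ) : ZMod 3), ((q.imI - q.imJ - q.imK : ℤ) : ZMod 3))
  map_zero' := by simp
  map_add' := by
    intro x y
    ext <;> simp <;> ring

lemma lipPhi_ker : lipPhi.ker = lipMultiples (⟨1, 1, 1, 0⟩ : ℍ[ℤ]) := by
  ext q
  rw [AddMonoidHom.mem_ker]
  obtain ⟨p, hp, p0, p1, p2, p3⟩ : ∃ p : ℍ[ℤ], p = (⟨1, 1, 1, 0⟩ : ℍ[ℤ]) ∧ p.re = 1 ∧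
    p.imI = 1 ∧ p.imJ = 1 ∧ p.imK = 0 := ⟨_, rfl, rfl, rfl, rfl, rfl⟩
  rw [← hp]
  change lipPhi q = 0 ↔ ∃ δ : ℍ[ℤ], δ * p = q
  have h : lipPhi q = 0 ↔ (3 : ℤ) ∣ q.re + q.imI + q.imJ ∧ (3 : ℤ) ∣ q.imI - q.imJ - q.imK := by
    rw [Prod.ext_iff]
    exact and_congr (ZMod.intCast_zmod_eq_zero_iff_dvd _ 3) (ZMod.intCast_zmod_eq_zero_iff_dvd _ 3)
  rw [h]
  constructor
  · rintro ⟨⟨s, hs⟩, ⟨t, ht⟩⟩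
    -- q = (3 s - I - J, I, J, I - J - 3 t)
    obtain ⟨d, d0, d1, d2, d3⟩ : ∃ d : ℍ[ℤ], d.re = s ∧ d.imI = q.imI - s - t ∧
      d.imJ = q.imJ - s + t ∧ d.imK = -t := ⟨⟨_, _, _, _⟩, rfl, rfl, rfl, rfl⟩
    refine ⟨d, ?_⟩
    ext <;> simp only [Quaternion.re_mul, Quaternion.imI_mul, Quaternion.imJ_mul,
      Quaternion.imK_mul, p0, p1, p2, p3, d0, d1, d2, d3] <;> linarith
  · rintro ⟨δ, rfl⟩
    simp only [Quaternion.re_mul, Quaternion.imI_mul, Quaternion.imJ_mul, Quaternion.imK_mul,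
      p0, p1, p2, p3]
    constructor <;> omega

lemma lipPhi_cases : ∀ z : ZMod 3 × ZMod 3, z = 0 ∨ ∃ a ∈ ({-1, 0, 1} : Finset ℤ),
    ∃ b ∈ ({-1, 0, 1} : Finset ℤ), ∃ c ∈ ({-1, 0, 1} : Finset ℤ), ∃ d ∈ ({-1, 0, 1} : Finset ℤ),
    a.natAbs + b.natAbs + c.natAbs + d.natAbs = 1 ∧
    (((a + b + c : ℤ) : ZMod 3), ((b - c - d : ℤ) : ZMod 3)) = z := by
  decide

lemma lipPhi_rep (z : ZMod 3 × ZMod 3) : ∃ q : ℍ[ℤ], lipPhi q = z ∧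
    q.re.natAbs + q.imI.natAbs + q.imJ.natAbs + q.imK.natAbs ≤ if z = 0 then 0 else 1 := by
  by_cases hz : z = 0
  · exact ⟨0, by simp [hz]⟩
  · obtain ⟨a, -, b, -, c, -, d, -, h1, h2⟩ := (lipPhi_cases z).resolve_left hz
    exact ⟨⟨a, b, c, d⟩, h2, by simp [hz, h1]⟩

/-- `H(ℤ)_π` is elementary abelian of order nine. -/
noncomputable def lipEquiv : LipMod (⟨1, 1, 1, 0⟩ : ℍ[ℤ]) ≃+ ZMod 3 × ZMod 3 :=
  (QuotientAddGroup.quotientAddEquivOfEq lipPhi_ker.symm).trans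
    (QuotientAddGroup.quotientKerEquivOfSurjective lipPhi
      (fun z => (lipPhi_rep z).imp fun _ h => h.1))

lemma lipEquiv_mk (q : ℍ[ℤ]) : lipEquiv (QuotientAddGroup.mk q) = lipPhi q := rfl

lemma lipWt_le (x : LipMod (⟨1, 1, 1, 0⟩ : ℍ[ℤ])) :
    lipWt _ x ≤ if lipEquiv x = 0 then 0 else 1 := by
  obtain ⟨q, h1, h2⟩ := lipPhi_rep (lipEquiv x)
  refine le_trans (Nat.sInf_le ⟨q, ?_, rfl⟩) h2
  apply lipEquiv.injective
  rw [lipEquiv_mk, h1]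

/-- Vectors with support `s`. -/
def suppVecs (n : ℕ) (s : Finset (Fin n)) : Finset (Fin n → ZMod 3 × ZMod 3) :=
  Fintype.piFinset fun i => if i ∈ s then Finset.univ.erase 0 else {0}

lemma mem_suppVecs {n : ℕ} {s : Finset (Fin n)} {v : Fin n → ZMod 3 × ZMod 3}
    (h : v ∈ suppVecs n s) : s = Finset.univ.filter (fun i => v i ≠ 0) := by
  ext i
  have := Fintype.mem_piFinset.1 h i
  by_cases hi : i ∈ s <;> simp_all

lemma card_suppVecs (n : ℕ) (s : Finset (Fin n)) : (suppVecs n s).card = 8 ^ s.card := by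
  unfold suppVecs
  rw [Fintype.card_piFinset]
  have : ∀ i, (if i ∈ s then (Finset.univ.erase 0 : Finset (ZMod 3 × ZMod 3)) else {0}).card
      = if i ∈ s then 8 else 1 := by
    intro i
    split_ifs
    · decide
    · rfl
  simp [this, Finset.prod_ite_mem]

/-- Vectors of Hamming weight at most two. -/
def hamBall (n : ℕ) : Finset (Fin n → ZMod 3 × ZMod 3) :=
  (Finset.range 3).biUnion fun j => (Finset.powersetCard j Finset.univ).biUnion (suppVecs n)

lemma card_hamBall (n : ℕ) : (hamBall n).card = 1 + n * 8 + n.choose 2 * 64 := by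
  unfold hamBall
  have key : ∀ j, ((Finset.powersetCard j Finset.univ).biUnion (suppVecs n)).card
      = n.choose j * 8 ^ j := by
    intro j
    rw [Finset.card_biUnion]
    · rw [Finset.sum_congr rfl (g := fun _ => 8 ^ j)]
      · simp
      · intro s hs
        rw [card_suppVecs, (Finset.mem_powersetCard.1 hs).2]
    · intro s _ t _ hst
      change Disjoint _ _
      rw [Finset.disjoint_left]
      intro v h1 h2
      exact hst ((mem_suppVecs h1).trans (mem_suppVecs h2).symm)
  rw [Finset.card_biUnion]
  · simp [key, Finset.sum_range_succ]
  · intro i _ j _ hij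
    change Disjoint _ _
    rw [Finset.disjoint_left]
    intro v h1 h2
    obtain ⟨s, hs, hv⟩ := Finset.mem_biUnion.1 h1
    obtain ⟨t, ht, hw⟩ := Finset.mem_biUnion.1 h2
    apply hij
    rw [← (Finset.mem_powersetCard.1 hs).2, ← (Finset.mem_powersetCard.1 ht).2,
      mem_suppVecs hv, mem_suppVecs hw]

lemma hamBall_wt {n : ℕ} {v : Fin n → ZMod 3 × ZMod 3} (hv : v ∈ hamBall n) :
    lipWtVec (⟨1, 1, 1, 0⟩ : ℍ[ℤ]) (fun i => lipEquiv.symm (v i)) ≤ 2 := by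
  obtain ⟨j, hj, hv⟩ := Finset.mem_biUnion.1 hv
  obtain ⟨s, hs, hv⟩ := Finset.mem_biUnion.1 hv
  have hj := Finset.mem_range.1 hj
  have hs := (Finset.mem_powersetCard.1 hs).2
  unfold lipWtVec
  calc _ ≤ ∑ i, (if v i ≠ 0 then 1 else 0) := by
        refine Finset.sum_le_sum fun i _ => (lipWt_le _).trans ?_
        simp
    _ = s.card := by rw [mem_suppVecs hv, Finset.card_filter]
    _ ≤ 2 := by omega

/-- An `(n, k)` linear code over `H(ℤ)_{1+e₁+e₂}` (so `N(π) = 3`) correcting all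
errors of Lipschitz weight 2 or less satisfies `9^(n-k) ≥ 32n² - 24n + 1`. -/
theorem sphere_packing_lipschitz_wt_two_1e1e2
    (n k : ℕ) (hn : 1 ≤ n) (hk : 1 ≤ k) (hkn : k ≤ n)
    (C : AddSubgroup (Fin n → LipMod (⟨1, 1, 1, 0⟩ : ℍ[ℤ])))
    (hcard : Nat.card C = 9 ^ k)
    (hcorr : CorrectsLip (⟨1, 1, 1, 0⟩ : ℍ[ℤ]) C 2) :
    32 * n ^ 2 - 24 * n + 1 ≤ 9 ^ (n - k) := by
  have hG : Nat.card (LipMod (⟨1, 1, 1, 0⟩ : ℍ[ℤ])) = 9 := by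
    rw [Nat.card_congr lipEquiv.toEquiv, Nat.card_prod, Nat.card_zmod]
  have : Finite (LipMod (⟨1, 1, 1, 0⟩ : ℍ[ℤ])) := Finite.of_equiv _ lipEquiv.symm.toEquiv
  have hV : Nat.card (Fin n → LipMod (⟨1, 1, 1, 0⟩ : ℍ[ℤ])) = 9 ^ n := by
    rw [Nat.card_fun, hG, Nat.card_fin]
  have hQ := AddSubgroup.card_eq_card_quotient_mul_card_addSubgroup C
  rw [hV, hcard, ← pow_sub_mul_pow 9 hkn] at hQ
  have hQ' := Nat.eq_of_mul_eq_mul_right (by positivity) hQ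
  have hinj : (hamBall n).card ≤ Nat.card ((Fin n → LipMod (⟨1, 1, 1, 0⟩ : ℍ[ℤ])) ⧸ C) := by
    have hf : Function.Injective (fun v : hamBall n =>
        (QuotientAddGroup.mk (fun i => lipEquiv.symm (v.1 i)) :
          (Fin n → LipMod (⟨1, 1, 1, 0⟩ : ℍ[ℤ])) ⧸ C)) := by
      intro v w hvw
      have hmem := QuotientAddGroup.eq.1 hvw
      rw [neg_add_eq_sub] at hmem
      have := hcorr _ _ (hamBall_wt w.2) (hamBall_wt v.2) hmem
      apply Subtype.ext
      funext i
      exact (lipEquiv.symm.injective (congrFun this i)).symm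
    simpa using Nat.card_le_card_of_injective _ hf
  rw [← hQ', card_hamBall] at hinj
  refine le_trans ?_ hinj
  obtain ⟨m, rfl⟩ : ∃ m, n = m + 1 := ⟨n - 1, by omega⟩
  have h2 : (m + 1).choose 2 * 2 = (m + 1) * m := by
    rw [Nat.choose_two_right, Nat.add_sub_cancel]
    exact Nat.div_mul_cancel (Nat.even_mul_pred_self (m + 1)).two_dvd
  have h3 : 32 * (m + 1) ^ 2 = 24 * (m + 1) + (8 * (m + 1) + 32 * ((m + 1) * m)) := by ring
  omega
end

section
/- Let π = 2 + e₁, so that N(π) = 5, and let n ≥ 1 and 1 ≤ k ≤ n. If C is an additive subgroup of H(ℤ)_{2+e₁}^n of cardinality 25^k (an (n,k) linear code) that corrects all errors of Lipschitz weight 2 or less, then 25^{n−k} ≥ 32n² − 8n + 1. -/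
open Quaternion

/-- The residue map `H(ℤ) → 𝔽₅ × 𝔽₅` whose kernel is `H(ℤ)(2+e₁)`. -/
def resMap : ℍ[ℤ] →+ ZMod 5 × ZMod 5 where
  toFun q := (((q.re + 3 * q.imI : ℤ) : ZMod 5), ((q.imJ + 2 * q.imK : ℤ) : ZMod 5))
  map_zero' := by simp
  map_add' x y := by
    ext <;> simp <;> ring

/-- The modulus `2 + e₁`. -/
def piQ : ℍ[ℤ] := ⟨2, 1, 0, 0⟩

lemma mul_pi_re (δ : ℍ[ℤ]) : (δ * piQ).re = 2 * δ.re - δ.imI := by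
  rw [Quaternion.re_mul]; simp only [piQ]; ring

lemma mul_pi_imI (δ : ℍ[ℤ]) : (δ * piQ).imI = δ.re + 2 * δ.imI := by
  rw [Quaternion.imI_mul]; simp only [piQ]; ring

lemma mul_pi_imJ (δ : ℍ[ℤ]) : (δ * piQ).imJ = 2 * δ.imJ + δ.imK := by
  rw [Quaternion.imJ_mul]; simp only [piQ]; ring

lemma mul_pi_imK (δ : ℍ[ℤ]) : (δ * piQ).imK = 2 * δ.imK - δ.imJ := by
  rw [Quaternion.imK_mul]; simp only [piQ]; ring

lemma resMap_ker (q : ℍ[ℤ]) :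
    resMap q = 0 ↔ q ∈ lipMultiples (⟨2, 1, 0, 0⟩ : ℍ[ℤ]) := by
  constructor
  · intro h
    have h' := Prod.ext_iff.1 h
    obtain ⟨h1, h2⟩ := h'
    replace h1 : ((q.re + 3 * q.imI : ℤ) : ZMod 5) = 0 := h1
    replace h2 : ((q.imJ + 2 * q.imK : ℤ) : ZMod 5) = 0 := h2
    rw [ZMod.intCast_zmod_eq_zero_iff_dvd] at h1 h2
    obtain ⟨m, hm⟩ := h1
    obtain ⟨l, hl⟩ := h2
    push_cast at hm hl
    have hex : ∃ δ : ℍ[ℤ], δ.re = 2 * m - q.imI ∧ δ.imI = q.imI - m ∧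
        δ.imJ = 2 * l - q.imK ∧ δ.imK = l :=
      ⟨⟨2 * m - q.imI, q.imI - m, 2 * l - q.imK, l⟩, rfl, rfl, rfl, rfl⟩
    obtain ⟨δ, d0, d1, d2, d3⟩ := hex
    refine ⟨δ, ?_⟩
    change δ * piQ = q
    apply Quaternion.ext
    · rw [mul_pi_re]; linarith
    · rw [mul_pi_imI]; linarith
    · rw [mul_pi_imJ]; linarith
    · rw [mul_pi_imK]; linarith
  · rintro ⟨δ, rfl⟩
    have h1 : ((5 * (δ.re + δ.imI) : ℤ) : ZMod 5) = 0 := by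
      rw [ZMod.intCast_zmod_eq_zero_iff_dvd]; exact ⟨_, rfl⟩
    have h2 : ((5 * δ.imK : ℤ) : ZMod 5) = 0 := by
      rw [ZMod.intCast_zmod_eq_zero_iff_dvd]; exact ⟨_, rfl⟩
    apply Prod.ext
    · change (((δ * piQ).re + 3 * (δ * piQ).imI : ℤ) : ZMod 5) = 0
      rw [← h1, mul_pi_re, mul_pi_imI]; congr 1; ring
    · change (((δ * piQ).imJ + 2 * (δ * piQ).imK : ℤ) : ZMod 5) = 0
      rw [← h2, mul_pi_imJ, mul_pi_imK]; congr 1; ring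

/-- The number of nonzero components. -/
def pairWt (a : ZMod 5 × ZMod 5) : ℕ := (if a.1 ≠ 0 then 1 else 0) + (if a.2 ≠ 0 then 1 else 0)

lemma rep_fst (x : ZMod 5) : ∃ a b : ℤ, ((a + 3 * b : ℤ) : ZMod 5) = x ∧
    a.natAbs + b.natAbs ≤ if x ≠ 0 then 1 else 0 := by
  fin_cases x
  · exact ⟨0, 0, rfl, by decide⟩
  · exact ⟨1, 0, rfl, by decide⟩
  · exact ⟨0, -1, rfl, by decide⟩
  · exact ⟨0, 1, rfl, by decide⟩
  · exact ⟨-1, 0, rfl, by decide⟩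

lemma rep_snd (x : ZMod 5) : ∃ a b : ℤ, ((a + 2 * b : ℤ) : ZMod 5) = x ∧
    a.natAbs + b.natAbs ≤ if x ≠ 0 then 1 else 0 := by
  fin_cases x
  · exact ⟨0, 0, rfl, by decide⟩
  · exact ⟨1, 0, rfl, by decide⟩
  · exact ⟨0, 1, rfl, by decide⟩
  · exact ⟨0, -1, rfl, by decide⟩
  · exact ⟨-1, 0, rfl, by decide⟩

lemma exists_rep (a : ZMod 5 × ZMod 5) : ∃ q : ℍ[ℤ], resMap q = a ∧
    q.re.natAbs + q.imI.natAbs + q.imJ.natAbs + q.imK.natAbs ≤ pairWt a := by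
  obtain ⟨a1, b1, h1, w1⟩ := rep_fst a.1
  obtain ⟨a2, b2, h2, w2⟩ := rep_snd a.2
  refine ⟨⟨a1, b1, a2, b2⟩, Prod.ext h1 h2, ?_⟩
  unfold pairWt
  change a1.natAbs + b1.natAbs + a2.natAbs + b2.natAbs ≤ _
  omega

lemma exists_equiv : ∃ e : ZMod 5 × ZMod 5 ≃ LipMod (⟨2, 1, 0, 0⟩ : ℍ[ℤ]),
    ∀ a, lipWt _ (e a) ≤ pairWt a := by
  choose r hr hw using exists_rep
  have hb : Function.Bijective
      (fun a => (QuotientAddGroup.mk (r a) : LipMod (⟨2, 1, 0, 0⟩ : ℍ[ℤ]))) := by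
    constructor
    · intro a b hab
      have := QuotientAddGroup.eq.1 hab
      rw [← resMap_ker, map_add, map_neg, hr, hr] at this
      exact neg_add_eq_zero.1 this
    · intro x
      induction x using QuotientAddGroup.induction_on with
      | H q =>
        refine ⟨resMap q, QuotientAddGroup.eq.2 ?_⟩
        rw [← resMap_ker, map_add, map_neg, hr, neg_add_cancel]
  refine ⟨Equiv.ofBijective _ hb, fun a => le_trans (Nat.sInf_le ⟨r a, rfl, rfl⟩) (hw a)⟩

lemma card_support {ι : Type} [Fintype ι] [DecidableEq ι] (S : Finset ι) :
    (Finset.univ.filter (fun v : ι → ZMod 5 => Finset.univ.filter (fun i => v i ≠ 0) = S)).card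
      = 4 ^ S.card := by
  have : Finset.univ.filter (fun v : ι → ZMod 5 => Finset.univ.filter (fun i => v i ≠ 0) = S)
      = Fintype.piFinset (fun i => if i ∈ S then Finset.univ.erase (0 : ZMod 5) else {0}) := by
    ext v
    simp only [Finset.mem_filter, Finset.mem_univ, true_and, Fintype.mem_piFinset,
      Finset.ext_iff]
    refine forall_congr' fun i => ?_
    by_cases h : i ∈ S <;> simp [h]
  rw [this, Fintype.card_piFinset]
  have h4 : (Finset.univ.erase (0 : ZMod 5)).card = 4 := by decide
  have : ∀ i, (if i ∈ S then Finset.univ.erase (0 : ZMod 5) else {0}).card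
      = if i ∈ S then 4 else 1 := by
    intro i; split_ifs
    · exact h4
    · simp
  simp [this]

lemma card_ball {ι : Type} [Fintype ι] [DecidableEq ι] :
    (Finset.univ.filter (fun v : ι → ZMod 5 =>
      (Finset.univ.filter (fun i => v i ≠ 0)).card ≤ 2)).card
      = 1 + Fintype.card ι * 4 + (Fintype.card ι).choose 2 * 16 := by
  have key : ∀ j, (Finset.univ.filter (fun v : ι → ZMod 5 =>
      (Finset.univ.filter (fun i => v i ≠ 0)).card = j)).card
      = (Fintype.card ι).choose j * 4 ^ j := by
    intro j
    rw [Finset.card_eq_sum_card_fiberwise (f := fun v => Finset.univ.filter (fun i => v i ≠ 0))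
      (t := Finset.powersetCard j Finset.univ)]
    · rw [Finset.sum_congr rfl (g := fun _ => 4 ^ j)]
      · simp [Finset.card_powersetCard]
      · intro S hS
        have hS' := (Finset.mem_powersetCard.1 hS).2
        rw [← hS', ← card_support S, Finset.filter_filter]
        congr 1
        ext v
        simp only [Finset.mem_filter, Finset.mem_univ, true_and, and_iff_right_iff_imp]
        intro h; rw [h]
    · intro v hv
      simpa [Finset.mem_powersetCard] using hv
  rw [Finset.card_eq_sum_card_fiberwise
    (f := fun v => (Finset.univ.filter (fun i => v i ≠ 0)).card) (t := Finset.range 3)]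
  · rw [Finset.sum_congr rfl (g := fun j => (Fintype.card ι).choose j * 4 ^ j)]
    · simp [Finset.sum_range_succ]
    · intro j hj
      rw [← key j, Finset.filter_filter]
      congr 1
      ext v
      simp only [Finset.mem_filter, Finset.mem_univ, true_and, and_iff_right_iff_imp]
      intro h; rw [h]; have := Finset.mem_range.1 hj; omega
  · intro v hv
    simp at hv ⊢
    omega

/-- An `(n, k)` linear code over `H(ℤ)_{2+e₁}` (so `N(π) = 5`) correcting all
errors of Lipschitz weight 2 or less satisfies `25^(n-k) ≥ 32n² - 8n + 1`. -/
theorem sphere_packing_lipschitz_wt_two_2e1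
    (n k : ℕ) (hn : 1 ≤ n) (hk : 1 ≤ k) (hkn : k ≤ n)
    (C : AddSubgroup (Fin n → LipMod (⟨2, 1, 0, 0⟩ : ℍ[ℤ])))
    (hcard : Nat.card C = 25 ^ k)
    (hcorr : CorrectsLip (⟨2, 1, 0, 0⟩ : ℍ[ℤ]) C 2) :
    32 * n ^ 2 - 8 * n + 1 ≤ 25 ^ (n - k) := by
  obtain ⟨e, he⟩ := exists_equiv
  have hA : Nat.card (LipMod (⟨2, 1, 0, 0⟩ : ℍ[ℤ])) = 25 := by
    rw [← Nat.card_congr e]; simp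
  have : Finite (LipMod (⟨2, 1, 0, 0⟩ : ℍ[ℤ])) := Finite.of_equiv _ e
  have hV : Nat.card (Fin n → LipMod (⟨2, 1, 0, 0⟩ : ℍ[ℤ])) = 25 ^ n := by
    rw [Nat.card_fun, hA]; simp
  have hq := AddSubgroup.card_eq_card_quotient_mul_card_addSubgroup C
  rw [hV, hcard] at hq
  have hq' : Nat.card ((Fin n → LipMod (⟨2, 1, 0, 0⟩ : ℍ[ℤ])) ⧸ C) = 25 ^ (n - k) := by
    have h25 : 0 < 25 ^ k := by positivity
    apply Nat.eq_of_mul_eq_mul_right h25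
    rw [← hq, ← pow_add, Nat.sub_add_cancel hkn]
  rw [← hq']
  let F : (Fin n ⊕ Fin n → ZMod 5) → (Fin n → LipMod (⟨2, 1, 0, 0⟩ : ℍ[ℤ])) :=
    fun v i => e (v (Sum.inl i), v (Sum.inr i))
  have hF : Function.Injective F := by
    intro u v h
    have h' : ∀ i, (u (Sum.inl i), u (Sum.inr i)) = (v (Sum.inl i), v (Sum.inr i)) :=
      fun i => e.injective (congrFun h i)
    funext i
    rcases i with i | i
    · exact (Prod.ext_iff.1 (h' i)).1
    · exact (Prod.ext_iff.1 (h' i)).2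
  have hwt : ∀ v, lipWtVec _ (F v) ≤ (Finset.univ.filter (fun i => v i ≠ 0)).card := by
    intro v
    rw [Finset.card_filter, Fintype.sum_sum_type, ← Finset.sum_add_distrib]
    exact Finset.sum_le_sum fun i _ => he _
  let B := Finset.univ.filter (fun v : Fin n ⊕ Fin n → ZMod 5 =>
      (Finset.univ.filter (fun i => v i ≠ 0)).card ≤ 2)
  have hB : B.card = 1 + (n + n) * 4 + (n + n).choose 2 * 16 := by
    have := card_ball (ι := Fin n ⊕ Fin n)
    simpa only [Fintype.card_sum, Fintype.card_fin] using this
  have hle : Nat.card B ≤ Nat.card ((Fin n → LipMod (⟨2, 1, 0, 0⟩ : ℍ[ℤ])) ⧸ C) := by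
    apply Nat.card_le_card_of_injective
      (fun v : B => (QuotientAddGroup.mk (F v.1) : (Fin n → LipMod (⟨2, 1, 0, 0⟩ : ℍ[ℤ])) ⧸ C))
    intro u v h
    have h1 := QuotientAddGroup.eq.1 h
    have hu := (Finset.mem_filter.1 u.2).2
    have hv := (Finset.mem_filter.1 v.2).2
    apply Subtype.ext
    apply hF
    symm
    apply hcorr _ _ ((hwt _).trans hv) ((hwt _).trans hu)
    rwa [sub_eq_add_neg, add_comm]
  have hc : Nat.card B = B.card := by simp
  rw [hc, hB] at hle
  refine le_trans (le_of_eq ?_) hle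
  have hch : (n + n).choose 2 = n * (2 * n - 1) := by
    rw [Nat.choose_two_right, show n + n = 2 * n by ring, mul_assoc]
    exact Nat.mul_div_cancel_left _ (by norm_num)
  rw [hch]
  obtain ⟨m, rfl⟩ : ∃ m, n = m + 1 := ⟨n - 1, by omega⟩
  rw [show 2 * (m + 1) - 1 = 2 * m + 1 by omega]
  have : 32 * (m + 1) ^ 2 = (32 * m ^ 2 + 56 * m + 24) + 8 * (m + 1) := by ring
  rw [this, Nat.add_sub_cancel]
  ring
end

section
/- Let n ≥ 1 and 1 ≤ k ≤ n. If C is an additive subgroup of H(ℤ)_{2+e₁+e₂+e₃}^n of cardinality 49^k (an (n,k) linear code over H(ℤ)_π with π = 2 + e₁ + e₂ + e₃, N(π) = 7) that corrects all errors of Lipschitz weight 2 or less, then 49^{n−k} ≥ 32n² + 1. Likewise, if C is an additive subgroup of H(ℤ)_{3+e₁+e₂}^n of cardinality 121^k (an (n,k) linear code over H(ℤ)_π with π = 3 + e₁ + e₂, N(π) = 11) that corrects all errors of Lipschitz weight 2 or less, then 121^{n−k} ≥ 32n² + 1. -/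
open Quaternion

namespace LipAux

def mkq (a b c d : ℤ) : ℍ[ℤ] := ⟨a, b, c, d⟩

@[simp] lemma mkq_re (a b c d : ℤ) : (mkq a b c d).re = a := rfl
@[simp] lemma mkq_imI (a b c d : ℤ) : (mkq a b c d).imI = b := rfl
@[simp] lemma mkq_imJ (a b c d : ℤ) : (mkq a b c d).imJ = c := rfl
@[simp] lemma mkq_imK (a b c d : ℤ) : (mkq a b c d).imK = d := rfl

def sg (s : Bool) : ℤ := if s then 1 else -1

def cA {m : ℕ} (i j : Fin m) (s : Bool) : ℤ := if i < j then 1 else sg s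
def cB {m : ℕ} (i j : Fin m) (s : Bool) : ℤ := if i < j then sg s else if j < i then -1 else 0

/-- `32 n ^ 2 + 1` (with `m = 4 n`) distinct integer vectors of `L¹`-weight at most two. -/
def fv {m : ℕ} : Option (Fin m × Fin m × Bool) → Fin m → ℤ
  | none => fun _ => 0
  | some (i, j, s) => fun k => (if k = i then cA i j s else 0) + (if k = j then cB i j s else 0)

lemma fv_weight {m : ℕ} (x : Option (Fin m × Fin m × Bool)) : ∑ k, (fv x k).natAbs ≤ 2 := by
  rcases x with _ | ⟨i, j, s⟩
  · simp [fv]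
  · have h : ∀ k, (fv (some (i, j, s)) k).natAbs ≤
        (if k = i then 1 else 0) + (if k = j then 1 else 0) := by
      intro k
      simp only [fv, cA, cB, sg]
      cases s <;> split_ifs <;> simp
    refine (Finset.sum_le_sum fun k _ => h k).trans ?_
    simp [Finset.sum_add_distrib]

lemma fv_inj {m : ℕ} : Function.Injective (fv (m := m)) := by
  have h0 : ∀ i j s, fv (m := m) (some (i, j, s)) ≠ fv none := by
    intro i j s h
    have h1 := congrFun h i
    cases s <;> simp only [fv, cA, cB, sg] at h1 <;> grind
  rintro (_ | ⟨i, j, s⟩) (_ | ⟨i', j', s'⟩) h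
  · rfl
  · exact absurd h.symm (h0 _ _ _)
  · exact absurd h (h0 _ _ _)
  · have h1 := congrFun h i
    have h2 := congrFun h j
    have h3 := congrFun h i'
    have h4 := congrFun h j'
    clear h h0
    rcases lt_trichotomy i j with hij | hij | hij <;>
    rcases lt_trichotomy i' j' with hij' | hij' | hij' <;>
    cases s <;> cases s' <;> simp only [fv, cA, cB, sg] at h1 h2 h3 h4 <;> grind

def l1 (q : ℍ[ℤ]) : ℕ := q.re.natAbs + q.imI.natAbs + q.imJ.natAbs + q.imK.natAbs

lemma lipWt_le (π q : ℍ[ℤ]) : lipWt π (QuotientAddGroup.mk q) ≤ l1 q :=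
  Nat.sInf_le ⟨q, rfl, rfl⟩

def qv {n : ℕ} (x : Option (Fin (n * 4) × Fin (n * 4) × Bool)) (i : Fin n) : ℍ[ℤ] :=
  ⟨fv x (finProdFinEquiv (i, 0)), fv x (finProdFinEquiv (i, 1)),
   fv x (finProdFinEquiv (i, 2)), fv x (finProdFinEquiv (i, 3))⟩

lemma qv_weight {n : ℕ} (x : Option (Fin (n * 4) × Fin (n * 4) × Bool)) :
    ∑ i, l1 (qv x i) ≤ 2 := by
  refine le_trans (le_of_eq ?_) (fv_weight x)
  rw [← finProdFinEquiv.sum_comp, Fintype.sum_prod_type]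
  refine Finset.sum_congr rfl fun i _ => ?_
  simp [Fin.sum_univ_four, l1, qv]

lemma qv_inj {n : ℕ} : Function.Injective (qv (n := n)) := by
  intro x y h
  apply fv_inj
  funext k
  obtain ⟨⟨i, j⟩, rfl⟩ := finProdFinEquiv.surjective k
  have hi := congrFun h i
  fin_cases j
  · exact congrArg (fun q : ℍ[ℤ] => q.re) hi
  · exact congrArg (fun q : ℍ[ℤ] => q.imI) hi
  · exact congrArg (fun q : ℍ[ℤ] => q.imJ) hi
  · exact congrArg (fun q : ℍ[ℤ] => q.imK) hi

/-- `π` has no short multiples. -/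
def NoShort (π : ℍ[ℤ]) : Prop := ∀ q ∈ lipMultiples π, l1 q ≤ 4 → q = 0

lemma l1_sub (p q : ℍ[ℤ]) : l1 (p - q) ≤ l1 p + l1 q := by
  simp only [l1, Quaternion.re_sub, Quaternion.imI_sub, Quaternion.imJ_sub, Quaternion.imK_sub]
  have h0 := Int.natAbs_sub_le p.re q.re
  have h1 := Int.natAbs_sub_le p.imI q.imI
  have h2 := Int.natAbs_sub_le p.imJ q.imJ
  have h3 := Int.natAbs_sub_le p.imK q.imK
  linarith

lemma main (π : ℍ[ℤ]) (N : ℕ) (hN : 0 < N) (hs : NoShort π)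
    (r : Fin N → LipMod π) (hr : Function.Surjective r)
    (n k : ℕ) (hk : k ≤ n) (C : AddSubgroup (Fin n → LipMod π))
    (hC : Nat.card C = N ^ k) (hc : CorrectsLip π C 2) : 32 * n ^ 2 + 1 ≤ N ^ (n - k) := by
  have : Finite (LipMod π) := Finite.of_surjective r hr
  have hcard : Nat.card (LipMod π) ≤ N := by
    simpa using Nat.card_le_card_of_surjective r hr
  let V := Fin n → LipMod π
  have hV : Nat.card V ≤ N ^ n := by
    simp only [V, Nat.card_fun, Nat.card_fin]
    have : Nat.card (Fin n) = n := by simp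
    exact Nat.pow_le_pow_left hcard n
  have hq : Nat.card (V ⧸ C) ≤ N ^ (n - k) := by
    have h := AddSubgroup.card_eq_card_quotient_mul_card_addSubgroup C
    rw [hC] at h
    have h2 : Nat.card (V ⧸ C) * N ^ k ≤ N ^ (n - k) * N ^ k := by
      rw [← h, ← pow_add, Nat.sub_add_cancel hk]; exact hV
    exact Nat.le_of_mul_le_mul_right h2 (by positivity)
  refine le_trans ?_ hq
  let g : Option (Fin (n * 4) × Fin (n * 4) × Bool) → V ⧸ C :=
    fun x => QuotientAddGroup.mk (fun i => (QuotientAddGroup.mk (qv x i) : LipMod π))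
  have hw : ∀ x : Option (Fin (n * 4) × Fin (n * 4) × Bool),
      lipWtVec π (fun i => (QuotientAddGroup.mk (qv x i) : LipMod π)) ≤ 2 := fun x =>
    (Finset.sum_le_sum fun i _ => lipWt_le π (qv x i)).trans (qv_weight x)
  have hg : Function.Injective g := by
    intro x y hxy
    have h1 : -(fun i => (QuotientAddGroup.mk (qv y i) : LipMod π)) +
        (fun i => (QuotientAddGroup.mk (qv x i) : LipMod π)) ∈ C :=
      QuotientAddGroup.eq.1 hxy.symm
    rw [neg_add_eq_sub] at h1
    have h2 := hc _ _ (hw x) (hw y) h1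
    apply qv_inj
    funext i
    have h3 := congrFun h2 i
    have h4 : -(qv y i) + qv x i ∈ lipMultiples π := QuotientAddGroup.eq.1 h3.symm
    rw [neg_add_eq_sub] at h4
    have hx : l1 (qv x i) ≤ 2 :=
      (Finset.single_le_sum (f := fun i => l1 (qv x i)) (fun _ _ => Nat.zero_le _)
        (Finset.mem_univ i)).trans (qv_weight x)
    have hy : l1 (qv y i) ≤ 2 :=
      (Finset.single_le_sum (f := fun i => l1 (qv y i)) (fun _ _ => Nat.zero_le _)
        (Finset.mem_univ i)).trans (qv_weight y)
    exact sub_eq_zero.1 (hs _ h4 ((l1_sub _ _).trans (by omega)))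
  have := Nat.card_le_card_of_injective g hg
  refine le_trans (le_of_eq ?_) this
  simp only [Nat.card_eq_fintype_card, Fintype.card_option, Fintype.card_prod, Fintype.card_fin,
    Fintype.card_bool]
  ring

lemma short_aux (p : ℕ) (hp : ∀ a b c d : Fin 5, a.1 + b.1 + c.1 + d.1 ≤ 4 →
    p ∣ a.1 ^ 2 + b.1 ^ 2 + c.1 ^ 2 + d.1 ^ 2 → a.1 + b.1 + c.1 + d.1 = 0)
    (π : ℍ[ℤ]) (hπ : π.re ^ 2 + π.imI ^ 2 + π.imJ ^ 2 + π.imK ^ 2 = p) : NoShort π := by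
  rintro q ⟨δ, hQ⟩ hq
  change δ * π = q at hQ
  have hn : q.re ^ 2 + q.imI ^ 2 + q.imJ ^ 2 + q.imK ^ 2 =
      p * (δ.re ^ 2 + δ.imI ^ 2 + δ.imJ ^ 2 + δ.imK ^ 2) := by
    rw [← hπ, ← hQ]
    simp only [Quaternion.re_mul, Quaternion.imI_mul, Quaternion.imJ_mul, Quaternion.imK_mul]
    ring
  have hd : p ∣ q.re.natAbs ^ 2 + q.imI.natAbs ^ 2 + q.imJ.natAbs ^ 2 + q.imK.natAbs ^ 2 := by
    zify
    simp only [sq_abs]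
    exact ⟨_, hn⟩
  unfold l1 at hq
  have := hp ⟨q.re.natAbs, by omega⟩ ⟨q.imI.natAbs, by omega⟩ ⟨q.imJ.natAbs, by omega⟩
    ⟨q.imK.natAbs, by omega⟩ hq hd
  simp only at this
  ext
  · change q.re = 0; omega
  · change q.imI = 0; omega
  · change q.imJ = 0; omega
  · change q.imK = 0; omega

lemma surj_aux (N : ℕ) (hN : 0 < N) (π : ℍ[ℤ])
    (h : ∀ q : ℍ[ℤ], ∃ a b : ℤ, ∀ c d : ℤ, 
      q - mkq (a - N * c) (b - N * d) 0 0 ∈ lipMultiples π) :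
    ∃ r : Fin (N * N) → LipMod π, Function.Surjective r := by
  refine ⟨fun x => QuotientAddGroup.mk (mkq ((finProdFinEquiv.symm x).1 : ℕ)
    ((finProdFinEquiv.symm x).2 : ℕ) 0 0), ?_⟩
  intro y
  obtain ⟨q, rfl⟩ := QuotientAddGroup.mk_surjective y
  obtain ⟨a, b, hab⟩ := h q
  have hN' : (0 : ℤ) < N := by exact_mod_cast hN
  have key : ∀ z : ℤ, ∃ u : Fin N, ((u : ℕ) : ℤ) = z - N * (z / N) := by
    intro z
    have h1 := Int.emod_nonneg z hN'.ne'
    have h2 := Int.emod_lt_of_pos z hN'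
    refine ⟨⟨(z % N).toNat, by omega⟩, ?_⟩
    have := Int.emod_def z N
    simp only
    omega
  obtain ⟨u, hu⟩ := key a
  obtain ⟨v, hv⟩ := key b
  refine ⟨finProdFinEquiv (u, v), ?_⟩
  have := hab (a / N) (b / N)
  rw [← hu, ← hv, ← neg_add_eq_sub] at this
  simp only [Equiv.symm_apply_apply]
  exact QuotientAddGroup.eq.2 this

end LipAux

/-- An `(n, k)` linear code over `H(ℤ)_{2+e₁+e₂+e₃}` (`N(π) = 7`), resp. over
`H(ℤ)_{3+e₁+e₂}` (`N(π) = 11`), correcting all errors of Lipschitz weight 2 or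
less satisfies `49^(n-k) ≥ 32n² + 1`, resp. `121^(n-k) ≥ 32n² + 1`. -/
theorem sphere_packing_lipschitz_wt_two_7_and_11 :
    (∀ (n k : ℕ), 1 ≤ n → 1 ≤ k → k ≤ n →
      ∀ C : AddSubgroup (Fin n → LipMod (⟨2, 1, 1, 1⟩ : ℍ[ℤ])),
        Nat.card C = 49 ^ k → CorrectsLip (⟨2, 1, 1, 1⟩ : ℍ[ℤ]) C 2 →
        32 * n ^ 2 + 1 ≤ 49 ^ (n - k)) ∧
    (∀ (n k : ℕ), 1 ≤ n → 1 ≤ k → k ≤ n →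
      ∀ C : AddSubgroup (Fin n → LipMod (⟨3, 1, 1, 0⟩ : ℍ[ℤ])),
        Nat.card C = 121 ^ k → CorrectsLip (⟨3, 1, 1, 0⟩ : ℍ[ℤ]) C 2 →
        32 * n ^ 2 + 1 ≤ 121 ^ (n - k)) := by
  refine ⟨?_, ?_⟩
  · intro n k _ _ hk C hC hc
    obtain ⟨r, hr⟩ := LipAux.surj_aux 7 (by norm_num) (LipAux.mkq 2 1 1 1) (by
      intro q
      refine ⟨q.re + 2 * q.imJ + 3 * q.imK, q.imI - 3 * q.imJ + 2 * q.imK, fun c d => ?_⟩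
      refine ⟨LipAux.mkq (-q.imK + 2 * c + d) (q.imJ - c + 2 * d) (q.imJ - c + d) (q.imK - c - d), ?_⟩
      ext <;> simp <;> ring)
    exact LipAux.main (LipAux.mkq 2 1 1 1) 49 (by norm_num)
      (LipAux.short_aux 7 (by decide) _ (by simp)) r hr n k hk C hC hc
  · intro n k _ _ hk C hC hc
    obtain ⟨r, hr⟩ := LipAux.surj_aux 11 (by norm_num) (LipAux.mkq 3 1 1 0) (by
      intro q
      refine ⟨q.re - 3 * q.imJ + q.imK, q.imI - q.imJ - 3 * q.imK, fun c d => ?_⟩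
      refine ⟨LipAux.mkq (q.imJ + 3 * c + d) (q.imK - c + 3 * d) (-c) (-d), ?_⟩
      ext <;> simp <;> ring)
    exact LipAux.main (LipAux.mkq 3 1 1 0) 121 (by norm_num)
      (LipAux.short_aux 11 (by decide) _ (by simp)) r hr n k hk C hC hc
end

section
/- Let π be a Lipschitz integer with N(π) = p a rational prime with p ≥ 13, and let n ≥ 1 and 1 ≤ k ≤ n. If C is an additive subgroup of H(ℤ)_π^n of cardinality (p²)^k (an (n,k) linear code) that corrects all errors of Lipschitz weight 2 or less, then (p²)^{n−k} ≥ 32n² + 8n + 1. -/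
open Quaternion

lemma lipaux_mul_inj (π : ℍ[ℤ]) (h0 : π ≠ 0) : Function.Injective (fun δ : ℍ[ℤ] => δ * π) :=
  fun _ _ h => mul_right_cancel₀ h0 h

noncomputable def lipauxEquiv (π : ℍ[ℤ]) (h0 : π ≠ 0) : ℍ[ℤ] ≃+ lipMultiples π :=
  { Equiv.ofInjective _ (lipaux_mul_inj π h0) with
    map_add' := fun a b => Subtype.ext (add_mul a b π) }

lemma lipaux_coe (π : ℍ[ℤ]) (h0 : π ≠ 0) (a : ℍ[ℤ]) : (lipauxEquiv π h0 a : ℍ[ℤ]) = a * π := rfl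

lemma lipaux_gen {E : Type*} [AddCommGroup E] (N : AddSubgroup E) (e : E ≃+ (Fin 4 → ℤ))
    (f : E ≃+ N) :
    N.index = (Matrix.det (Matrix.of fun i j => e (f (e.symm (Pi.single j 1)) : E) i)).natAbs := by
  let b : Module.Basis (Fin 4) ℤ E := Module.Basis.ofEquivFun e.toIntLinearEquiv
  have h := AddSubgroup.index_eq_natAbs_det b N (b.map f.toIntLinearEquiv)
  rw [h, Module.Basis.det_apply]
  congr 2
  ext i j
  rw [Module.Basis.toMatrix_apply]
  simp [b]

def lipauxTuple : ℍ[ℤ] ≃+ (Fin 4 → ℤ) where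
  toFun q := ![q.re, q.imI, q.imJ, q.imK]
  invFun v := ⟨v 0, v 1, v 2, v 3⟩
  left_inv _ := rfl
  right_inv v := by ext i; fin_cases i <;> rfl
  map_add' a b := by ext i; fin_cases i <;> rfl

lemma lipauxTuple_apply (q : ℍ[ℤ]) : lipauxTuple q = ![q.re, q.imI, q.imJ, q.imK] := rfl

lemma lipauxTuple_re (v : Fin 4 → ℤ) : (lipauxTuple.symm v).re = v 0 := rfl

lemma lipauxTuple_imI (v : Fin 4 → ℤ) : (lipauxTuple.symm v).imI = v 1 := rfl

lemma lipauxTuple_imJ (v : Fin 4 → ℤ) : (lipauxTuple.symm v).imJ = v 2 := rfl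

lemma lipauxTuple_imK (v : Fin 4 → ℤ) : (lipauxTuple.symm v).imK = v 3 := rfl

lemma lipaux_index (π : ℍ[ℤ]) (h0 : π ≠ 0) :
    (Nat.card (LipMod π) : ℤ) = (Quaternion.normSq π) ^ 2 := by
  have h := lipaux_gen (lipMultiples π) lipauxTuple (lipauxEquiv π h0)
  have h2 : (Matrix.of fun i j => lipauxTuple (lipauxEquiv π h0
      (lipauxTuple.symm (Pi.single j 1)) : ℍ[ℤ]) i) =
      !![π.re, -π.imI, -π.imJ, -π.imK; π.imI, π.re, π.imK, -π.imJ;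
         π.imJ, -π.imK, π.re, π.imI; π.imK, π.imJ, -π.imI, π.re] := by
    ext i j
    rw [Matrix.of_apply, lipaux_coe, lipauxTuple_apply, Quaternion.re_mul, Quaternion.imI_mul,
      Quaternion.imJ_mul, Quaternion.imK_mul, lipauxTuple_re, lipauxTuple_imI, lipauxTuple_imJ,
      lipauxTuple_imK]
    fin_cases i <;> fin_cases j <;> simp
  have h3 : Matrix.det !![π.re, -π.imI, -π.imJ, -π.imK; π.imI, π.re, π.imK, -π.imJ;
         π.imJ, -π.imK, π.re, π.imI; π.imK, π.imJ, -π.imI, π.re] = (Quaternion.normSq π) ^ 2 := by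
    rw [Quaternion.normSq_def']
    simp [Matrix.det_succ_row_zero, Fin.sum_univ_succ, Fin.succAbove]
    ring
  rw [h2, h3] at h
  change ((lipMultiples π).index : ℤ) = _
  rw [h, Int.natCast_natAbs, abs_of_nonneg (by positivity)]

def l1q (q : ℍ[ℤ]) : ℕ := q.re.natAbs + q.imI.natAbs + q.imJ.natAbs + q.imK.natAbs

lemma lipaux_wt_le (π q : ℍ[ℤ]) : lipWt π (QuotientAddGroup.mk q : LipMod π) ≤ l1q q :=
  Nat.sInf_le ⟨q, rfl, rfl⟩

lemma lipaux_sq (a b c d : ℤ) (p : ℕ) (hp13 : 13 ≤ p) (hp : p.Prime) (hd : (p : ℤ) ∣ a^2+b^2+c^2+d^2)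
    (h : |a| + |b| + |c| + |d| ≤ 4) : a = 0 ∧ b = 0 ∧ c = 0 ∧ d = 0 := by
  have ha := abs_nonneg a
  have hb := abs_nonneg b
  have hc := abs_nonneg c
  have hd' := abs_nonneg d
  rw [← sq_abs a, ← sq_abs b, ← sq_abs c, ← sq_abs d] at hd
  rw [← abs_eq_zero, ← abs_eq_zero (a := b), ← abs_eq_zero (a := c), ← abs_eq_zero (a := d)]
  generalize |a| = a at *
  generalize |b| = b at *
  generalize |c| = c at *
  generalize |d| = d at *
  by_cases h0 : a^2+b^2+c^2+d^2 = 0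
  · refine ⟨?_, ?_, ?_, ?_⟩ <;> nlinarith [sq_nonneg a, sq_nonneg b, sq_nonneg c, sq_nonneg d]
  exfalso
  have hle := Int.le_of_dvd (by positivity) hd
  have hle2 : a^2+b^2+c^2+d^2 ≤ 16 := by
    nlinarith [mul_nonneg ha hb, mul_nonneg ha hc, mul_nonneg ha hd', mul_nonneg hb hc,
      mul_nonneg hb hd', mul_nonneg hc hd']
  have hp16 : p ≤ 16 := by omega
  have hp' : p = 13 := by
    interval_cases p
    · rfl
    all_goals (exfalso; revert hp; norm_num)
  subst hp'
  obtain ⟨m, hm⟩ := hd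
  have hm1 : m = 1 := by push_cast at hm; omega
  have h1 : a ≤ 4 := by omega
  have h2 : b ≤ 4 := by omega
  have h3 : c ≤ 4 := by omega
  have h4 : d ≤ 4 := by omega
  subst hm1
  interval_cases a <;> interval_cases b <;> interval_cases c <;> first | omega | (interval_cases d <;> omega)

lemma lipaux_inj (π : ℍ[ℤ]) (p : ℕ) (hp : p.Prime) (hp13 : 13 ≤ p)
    (hN : Quaternion.normSq π = (p : ℤ)) (q r : ℍ[ℤ]) (hq : l1q q ≤ 2) (hr : l1q r ≤ 2)
    (h : (QuotientAddGroup.mk q : LipMod π) = QuotientAddGroup.mk r) : q = r := by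
  rw [QuotientAddGroup.eq] at h
  obtain ⟨δ, hδ⟩ := h
  have hn : (p : ℤ) ∣ Quaternion.normSq (-q + r) := by
    rw [← hδ]
    simp only [map_mul, hN]
    exact dvd_mul_left _ _
  rw [Quaternion.normSq_def'] at hn
  unfold l1q at hq hr
  have := lipaux_sq _ _ _ _ p hp13 hp hn (by
    simp only [Quaternion.re_add, Quaternion.imI_add, Quaternion.imJ_add, Quaternion.imK_add,
      Quaternion.re_neg, Quaternion.imI_neg, Quaternion.imJ_neg, Quaternion.imK_neg]
    simp only [Int.abs_eq_natAbs]
    omega)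
  simp at this
  ext <;> omega

lemma lipaux_ball1 (d : ℕ) : ∃ S : Finset (Fin d → ℤ), S.card = 2 * d + 1 ∧
    ∀ v ∈ S, ∑ i, (v i).natAbs ≤ 1 := by
  induction d with
  | zero => exact ⟨{0}, by simp, by simp⟩
  | succ d ih =>
    obtain ⟨S, hS, hS'⟩ := ih
    refine ⟨(({0} : Finset ℤ) ×ˢ S ∪ ({1, -1} : Finset ℤ) ×ˢ {0}).map
      (Fin.consEquiv (fun _ : Fin (d+1) => ℤ)).toEmbedding, ?_, ?_⟩
    · rw [Finset.card_map, Finset.card_union_of_disjoint, Finset.card_product, Finset.card_product, hS]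
      · simp; omega
      · rw [Finset.disjoint_left]; rintro ⟨a, v⟩; simp; grind
    · intro v hv
      simp only [Finset.mem_map, Finset.mem_union, Finset.mem_product, Finset.mem_singleton, Finset.mem_insert] at hv
      obtain ⟨⟨a, w⟩, hw, rfl⟩ := hv
      simp only [Equiv.coe_toEmbedding, Fin.consEquiv_apply, Fin.sum_univ_succ, Fin.cons_zero, Fin.cons_succ]
      rcases hw with ⟨rfl, hw⟩ | ⟨rfl | rfl, rfl⟩
      · simpa using hS' _ hw
      · simp
      · simp

lemma lipaux_ball2 (d : ℕ) : ∃ S : Finset (Fin d → ℤ), S.card = 2 * d ^ 2 + 2 * d + 1 ∧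
    ∀ v ∈ S, ∑ i, (v i).natAbs ≤ 2 := by
  induction d with
  | zero => exact ⟨{0}, by simp, by simp⟩
  | succ d ih =>
    obtain ⟨S, hS, hS'⟩ := ih
    obtain ⟨T, hT, hT'⟩ := lipaux_ball1 d
    refine ⟨(({0} : Finset ℤ) ×ˢ S ∪ (({1, -1} : Finset ℤ) ×ˢ T ∪ ({2, -2} : Finset ℤ) ×ˢ {0})).map
      (Fin.consEquiv (fun _ : Fin (d+1) => ℤ)).toEmbedding, ?_, ?_⟩
    · rw [Finset.card_map, Finset.card_union_of_disjoint, Finset.card_union_of_disjoint,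
        Finset.card_product, Finset.card_product, Finset.card_product, hS, hT]
      · simp; ring
      · rw [Finset.disjoint_left]; rintro ⟨a, v⟩; simp; grind
      · rw [Finset.disjoint_left]; rintro ⟨a, v⟩; simp; grind
    · intro v hv
      simp only [Finset.mem_map, Finset.mem_union, Finset.mem_product, Finset.mem_singleton, Finset.mem_insert] at hv
      obtain ⟨⟨a, w⟩, hw, rfl⟩ := hv
      simp only [Equiv.coe_toEmbedding, Fin.consEquiv_apply, Fin.sum_univ_succ, Fin.cons_zero, Fin.cons_succ]
      rcases hw with ⟨rfl, hw⟩ | ⟨rfl | rfl, hw⟩ | ⟨rfl | rfl, rfl⟩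
      · simpa using hS' _ hw
      · have := hT' _ hw
        simp at this ⊢; omega
      · have := hT' _ hw
        simp at this ⊢; omega
      · simp
      · simp

def lipauxVec {n : ℕ} (v : Fin (n * 4) → ℤ) (i : Fin n) : ℍ[ℤ] :=
  ⟨v (finProdFinEquiv (i, 0)), v (finProdFinEquiv (i, 1)), v (finProdFinEquiv (i, 2)),
    v (finProdFinEquiv (i, 3))⟩

lemma lipauxVec_inj {n : ℕ} : Function.Injective (lipauxVec (n := n)) := by
  intro v w h
  funext j
  obtain ⟨⟨i, c⟩, rfl⟩ := finProdFinEquiv.surjective j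
  have hi := congrFun h i
  have h0 := congrArg (fun q : ℍ[ℤ] => q.re) hi
  have h1 := congrArg (fun q : ℍ[ℤ] => q.imI) hi
  have h2 := congrArg (fun q : ℍ[ℤ] => q.imJ) hi
  have h3 := congrArg (fun q : ℍ[ℤ] => q.imK) hi
  fin_cases c <;> assumption

lemma lipauxVec_sum {n : ℕ} (v : Fin (n * 4) → ℤ) :
    ∑ i, l1q (lipauxVec v i) = ∑ j, (v j).natAbs := by
  rw [← finProdFinEquiv.sum_comp, Fintype.sum_prod_type]
  simp only [Fin.sum_univ_four]
  rfl

/-- An `(n, k)` linear code over `H(ℤ)_π` (`N(π) = p` a prime with `p ≥ 13`)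
correcting all errors of Lipschitz weight 2 or less satisfies
`(p²)^(n-k) ≥ 32n² + 8n + 1`. -/
theorem sphere_packing_lipschitz_wt_two (π : ℍ[ℤ]) (p : ℕ) (hp : p.Prime) (hp13 : 13 ≤ p)
    (hN : Quaternion.normSq π = (p : ℤ))
    (n k : ℕ) (hn : 1 ≤ n) (hk : 1 ≤ k) (hkn : k ≤ n)
    (C : AddSubgroup (Fin n → LipMod π))
    (hcard : Nat.card C = (p ^ 2) ^ k)
    (hcorr : CorrectsLip π C 2) :
    32 * n ^ 2 + 8 * n + 1 ≤ (p ^ 2) ^ (n - k) := by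
  have hp0 : 0 < p := hp.pos
  have h0 : π ≠ 0 := by
    rintro rfl
    simp at hN
    omega
  have hL : Nat.card (LipMod π) = p ^ 2 := by
    have := lipaux_index π h0
    rw [hN] at this
    exact_mod_cast this
  have hV : Nat.card (Fin n → LipMod π) = (p ^ 2) ^ n := by
    rw [Nat.card_fun, hL, Nat.card_eq_fintype_card, Fintype.card_fin]
  have hfin : Finite (Fin n → LipMod π) := Nat.finite_of_card_ne_zero (by rw [hV]; positivity)
  have hQ : Nat.card ((Fin n → LipMod π) ⧸ C) = (p ^ 2) ^ (n - k) := by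
    have h := AddSubgroup.card_eq_card_quotient_mul_card_addSubgroup C
    rw [hV, hcard, ← pow_sub_mul_pow (p ^ 2) hkn] at h
    exact (Nat.eq_of_mul_eq_mul_right (by positivity) h).symm
  obtain ⟨S, hS, hS'⟩ := lipaux_ball2 (n * 4)
  let g : (Fin (n * 4) → ℤ) → (Fin n → LipMod π) := fun v i => QuotientAddGroup.mk (lipauxVec v i)
  have hw : ∀ v ∈ S, ∑ i, l1q (lipauxVec v i) ≤ 2 := fun v hv => by
    rw [lipauxVec_sum]; exact hS' v hv
  have hg : ∀ v ∈ S, lipWtVec π (g v) ≤ 2 := fun v hv =>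
    (Finset.sum_le_sum fun i _ => lipaux_wt_le π _).trans (hw v hv)
  have h1 : ∀ v ∈ S, ∀ i, l1q (lipauxVec v i) ≤ 2 := fun v hv i =>
    (Finset.single_le_sum (f := fun i => l1q (lipauxVec v i)) (fun _ _ => Nat.zero_le _)
      (Finset.mem_univ i)).trans (hw v hv)
  have hinj : Function.Injective
      (fun v : S => (QuotientAddGroup.mk (g v.1) : (Fin n → LipMod π) ⧸ C)) := by
    rintro ⟨v, hv⟩ ⟨w, hw⟩ h
    simp only at h
    rw [QuotientAddGroup.eq] at h
    have hgw := hcorr (g w) (g v) (hg w hw) (hg v hv) (by rwa [sub_eq_neg_add])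
    apply Subtype.ext
    apply lipauxVec_inj
    funext i
    exact (lipaux_inj π p hp hp13 hN _ _ (h1 w hw i) (h1 v hv i) (congrFun hgw i)).symm
  have := Nat.card_le_card_of_injective _ hinj
  rw [hQ, Nat.card_eq_fintype_card, Fintype.card_coe, hS] at this
  calc _ = 2 * (n * 4) ^ 2 + 2 * (n * 4) + 1 := by ring
    _ ≤ _ := this
end
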